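/- Suppose the choice of model set is independent of the comparator: there is a partition Θ of 𝓜 into disjoint subsets such that Φ = { {(M, π) : M ∈ θ} : θ ∈ Θ, π ∈ Π }. Then for every η > 0, max_{ρ∈Δ(Φ)} max_{ν∈Δ(Ψ)} min_{p∈Δ(Π)} AIR^Φ_{ρ,η}(p,ν) = DEC^KL_η(𝓜̄(Φ)). -/

import Mathlib

open scoped BigOperators

noncomputable section

/-- A probability distribution on a finite type, represented as a nonnegative
function summing to one. -/
structure FDist (X : Type*) [Fintype X] where
  p : X → ℝ
  nonneg : ∀ x, 0 ≤ p x
  sum_one : ∑ x, p x = 1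

/-- Kullback–Leibler divergence between two (finitely supported) distributions,
valued in `EReal`; it is `⊤` when `p` is not absolutely continuous w.r.t. `q`. -/
def KL {X : Type*} [Fintype X] (p q : X → ℝ) : EReal :=
  haveI := Classical.propDecidable (∀ x, q x = 0 → p x = 0)
  if ∀ x, q x = 0 → p x = 0 then ((∑ x, p x * Real.log (p x / q x) : ℝ) : EReal)
  else (⊤ : EReal)

section GeneralDM

variable {Pol Obs Mod I : Type*}
variable [Fintype Pol] [Fintype Obs] [Fintype Mod] [Fintype I] [DecidableEq I]

/-- Posterior distribution over the partition cells `I` given prior `ν` on `Mod × Pol`,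
after playing `π` and observing `o`. -/
def post (q : Mod → Pol → Obs → ℝ) (part : Mod × Pol → Option I)
    (ν : Mod × Pol → ℝ) (π : Pol) (o : Obs) : I → ℝ := fun i =>
  (∑ mp : Mod × Pol, if part mp = some i then ν mp * q mp.1 π o else 0) /
    (∑ mp : Mod × Pol, ν mp * q mp.1 π o)

/-- `AIR^Φ_{ρ,η}(p,ν)`. -/
def AIR (q : Mod → Pol → Obs → ℝ) (V : Mod → Pol → ℝ) (part : Mod × Pol → Option I)
    (η : ℝ) (ρ : I → ℝ) (p : Pol → ℝ) (ν : Mod × Pol → ℝ) : EReal :=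
  ((∑ π : Pol, ∑ mp : Mod × Pol, p π * ν mp * (V mp.1 mp.2 - V mp.1 π) : ℝ) : EReal)
    - ((η⁻¹ : ℝ) : EReal) *
        ∑ π : Pol, ∑ mp : Mod × Pol, ∑ o : Obs,
          ((p π * ν mp * q mp.1 π o : ℝ) : EReal) * KL (post q part ν π o) ρ

/-- `max_{ρ∈Δ(Φ)} max_{ν∈Δ(Ψ)} min_{p∈Δ(Π)} AIR^Φ_{ρ,η}(p,ν)`. -/
def AIRmaxmin (q : Mod → Pol → Obs → ℝ) (V : Mod → Pol → ℝ)
    (part : Mod × Pol → Option I) (η : ℝ) : EReal :=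
  ⨆ ρ : FDist I, ⨆ ν : {ν : FDist (Mod × Pol) // ∀ mp, part mp = none → ν.p mp = 0},
    ⨅ p : FDist Pol, AIR q V part η ρ.p p.p ν.1.p

/-- Observation distribution of the mixture model `M^μ`. -/
def mixObs (q : Mod → Pol → Obs → ℝ) (μ : Mod → ℝ) (π : Pol) : Obs → ℝ := fun o =>
  ∑ m : Mod, μ m * q m π o

/-- Observation distribution of the mixture of the model-marginal of `ν ∈ Δ(𝓜 × Π)`. -/
def pairMixObs (q : Mod → Pol → Obs → ℝ) (ν : Mod × Pol → ℝ) (π : Pol) : Obs → ℝ := fun o =>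
  ∑ mp : Mod × Pol, ν mp * q mp.1 π o

/-- The `Φ`-dependent DEC, `DEC^KL_η(𝓜, Φ)`. -/
def DECPhi (q : Mod → Pol → Obs → ℝ) (V : Mod → Pol → ℝ)
    (part : Mod × Pol → Option I) (η : ℝ) : EReal :=
  ⨆ μbar : FDist Mod, ⨅ p : FDist Pol, ⨆ i : I,
    ⨆ ν : {ν : FDist (Mod × Pol) // ∀ mp, ν.p mp ≠ 0 → part mp = some i},
      ((∑ π : Pol, p.p π *
          ((∑ mp : Mod × Pol, ν.1.p mp * V mp.1 mp.2)
            - (∑ mp : Mod × Pol, ν.1.p mp * V mp.1 π)) : ℝ) : EReal)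
        - ((η⁻¹ : ℝ) : EReal) *
            ∑ π : Pol, ((p.p π : ℝ) : EReal) * KL (pairMixObs q ν.1.p π) (mixObs q μbar.p π)

/-- `C(Φ) = max_{φ∈Φ} max_{ν∈Δ(φ)} (E_{(M,π⋆)∼ν}[V_M(π⋆)] − max_π V_{M^ν}(π))`. -/
def CPhi (V : Mod → Pol → ℝ) (part : Mod × Pol → Option I) : ℝ :=
  ⨆ i : I, ⨆ ν : {ν : FDist (Mod × Pol) // ∀ mp, ν.p mp ≠ 0 → part mp = some i},
    ((∑ mp : Mod × Pol, ν.1.p mp * V mp.1 mp.2)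
      - ⨆ π : Pol, ∑ mp : Mod × Pol, ν.1.p mp * V mp.1 π)

/-- `DEC^KL_η(𝓜̄(Φ))`: the DEC of the `Φ`-aware convexification
`𝓜̄(Φ) = ⋃_{φ∈Φ} co({M : (M,π) ∈ φ for some π})`. -/
def DECbar (q : Mod → Pol → Obs → ℝ) (V : Mod → Pol → ℝ)
    (part : Mod × Pol → Option I) (η : ℝ) : EReal :=
  ⨆ μbar : {μ : FDist Mod // ∀ m, μ.p m ≠ 0 → ∃ i : I, ∃ π : Pol, part (m, π) = some i},
    ⨅ p : FDist Pol, ⨆ i : I,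
      ⨆ μ : {μ : FDist Mod // ∀ m, μ.p m ≠ 0 → ∃ π : Pol, part (m, π) = some i},
        ((∑ π : Pol, p.p π *
            ((⨆ π' : Pol, ∑ m : Mod, μ.1.p m * V m π') - ∑ m : Mod, μ.1.p m * V m π) : ℝ) : EReal)
          - ((η⁻¹ : ℝ) : EReal) *
              ∑ π : Pol, ((p.p π : ℝ) : EReal) * KL (mixObs q μ.1.p π) (mixObs q μbar.1.p π)

/-- `DEC^KL_η(𝓜)` for the class of pure models. -/
def DECpure (q : Mod → Pol → Obs → ℝ) (V : Mod → Pol → ℝ) (η : ℝ) : EReal :=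
  ⨆ μbar : FDist Mod, ⨅ p : FDist Pol, ⨆ m : Mod,
    ((∑ π : Pol, p.p π * ((⨆ π' : Pol, V m π') - V m π) : ℝ) : EReal)
      - ((η⁻¹ : ℝ) : EReal) * ∑ π : Pol, ((p.p π : ℝ) : EReal) * KL (q m π) (mixObs q μbar.p π)

/-- `DEC^KL_η(𝓜̄(Θ))` for a total partition `Θ` of the models. -/
def DECbarTheta (q : Mod → Pol → Obs → ℝ) (V : Mod → Pol → ℝ)
    (partM : Mod → I) (η : ℝ) : EReal :=
  ⨆ μbar : FDist Mod, ⨅ p : FDist Pol, ⨆ i : I,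
    ⨆ μ : {μ : FDist Mod // ∀ m, μ.p m ≠ 0 → partM m = i},
      ((∑ π : Pol, p.p π *
          ((⨆ π' : Pol, ∑ m : Mod, μ.1.p m * V m π') - ∑ m : Mod, μ.1.p m * V m π) : ℝ) : EReal)
        - ((η⁻¹ : ℝ) : EReal) *
            ∑ π : Pol, ((p.p π : ℝ) : EReal) * KL (mixObs q μ.1.p π) (mixObs q μbar.p π)

/-- Posterior over a model partition `Θ` given prior `ν` on models. -/
def postM (q : Mod → Pol → Obs → ℝ) (partM : Mod → I) (ν : Mod → ℝ)
    (π : Pol) (o : Obs) : I → ℝ := fun i =>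
  (∑ m : Mod, if partM m = i then ν m * q m π o else 0) / (∑ m : Mod, ν m * q m π o)

/-- `InfoAIR^Θ_{ρ,η}(p, ν, π^Θ)`. -/
def InfoAIR (q : Mod → Pol → Obs → ℝ) (V : Mod → Pol → ℝ) (partM : Mod → I)
    (η : ℝ) (ρ : I → ℝ) (p : Pol → ℝ) (ν : Mod → ℝ) (πΘ : I → Pol) : EReal :=
  ((∑ π : Pol, ∑ m : Mod, p π * ν m * (V m (πΘ (partM m)) - V m π) : ℝ) : EReal)
    - ((η⁻¹ : ℝ) : EReal) *
        ∑ π : Pol, ∑ m : Mod, ∑ o : Obs,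
          ((p π * ν m * q m π o : ℝ) : EReal) * KL (postM q partM ν π o) ρ

end GeneralDM

/-!
Both sides are values of the same game. Writing `Z = E_ν[M(·|π)]`, the information term of `AIR` is
the relative entropy between the joint law of (cell, observation) and the product of `ρ` and `Z`.
It is smallest when `ρ` is the prior over cells, where it is the mutual information `I` of cell and
observation.

Conditioning `ν` on the cell writes regret minus information as an average over the cells. With the
model marginal of `ν` as reference, each cell contributes at most its `DECbar` payoff, because its
comparator is fixed; hence `AIRmaxmin ≤ DECbar`.

Conversely, fix a reference `c`, and replace `I` by the relative entropy to the product of the prior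
over cells and `c`, which is at least `I`. The resulting payoff is concave and continuous in `ν`, so
the minimax theorem turns best replies to each `ν` into one `p` that is good against every `ν`,
in particular against a mixture of models from one cell together with its best policy. Making `p`
fully supported sends the payoff to `⊥` at every mixture that is not absolutely continuous with
respect to `c`.
-/

section RelativeEntropy

variable {X : Type*}

/-- Absolute continuity `p ≪ q` of finite vectors. -/
def AbsCont (p q : X → ℝ) : Prop := ∀ x, q x = 0 → p x = 0

/-- Relative entropy of two nonnegative vectors of arbitrary total mass. Being real-valued, it is
meaningful only when `AbsCont p q`. -/
def relEnt [Fintype X] (p q : X → ℝ) : ℝ := ∑ x, p x * Real.log (p x / q x)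

theorem AbsCont.refl (p : X → ℝ) : AbsCont p p := fun _ h => h

theorem AbsCont.smul {p q : X → ℝ} (h : AbsCont p q) (s : ℝ) : AbsCont (s • p) (s • q) := by
  intro x hx
  rcases mul_eq_zero.mp hx with hs | hqx
  · simp [hs]
  · simp [h x hqx]

/-- The tangent-line bound behind all the inequalities on relative entropy. -/
theorem mul_log_add_sub_le_mul_log_div {a b r : ℝ} (ha : 0 ≤ a) (hb : 0 ≤ b) (hab : b = 0 → a = 0)
    (hr : 0 < r) : a * Real.log r + (a - r * b) ≤ a * Real.log (a / b) := by
  rcases ha.eq_or_lt with rfl | ha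
  · simpa using mul_nonneg hr.le hb
  have hb : 0 < b := hb.lt_of_ne fun h => ha.ne' (hab h.symm)
  have htangent : 1 - r * b / a ≤ Real.log (a / b) - Real.log r := by
    have h := Real.one_sub_inv_le_log_of_pos (show 0 < a / b / r by positivity)
    rwa [Real.log_div (by positivity) hr.ne', div_div, inv_div, mul_comm b r] at h
  calc a * Real.log r + (a - r * b) = a * (Real.log r + (1 - r * b / a)) := by field_simp
    _ ≤ a * Real.log (a / b) := by gcongr; linarith

theorem add_mul_log_div_le {a a' b b' : ℝ} (ha : 0 ≤ a) (hb : 0 ≤ b) (ha' : 0 ≤ a') (hb' : 0 ≤ b')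
    (hab : b = 0 → a = 0) (hab' : b' = 0 → a' = 0) :
    (a + a') * Real.log ((a + a') / (b + b'))
      ≤ a * Real.log (a / b) + a' * Real.log (a' / b') := by
  rcases (add_nonneg ha ha').eq_or_lt with hzero | hpos
  · obtain ⟨rfl, rfl⟩ := (add_eq_zero_iff_of_nonneg ha ha').mp hzero.symm
    simp
  have hbpos : 0 < b + b' := (add_nonneg hb hb').lt_of_ne fun h => by
    obtain ⟨hb0, hb0'⟩ := (add_eq_zero_iff_of_nonneg hb hb').mp h.symm
    simp [hab hb0, hab' hb0'] at hpos
  have hr : 0 < (a + a') / (b + b') := div_pos hpos hbpos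
  have h := mul_log_add_sub_le_mul_log_div ha hb hab hr
  have h' := mul_log_add_sub_le_mul_log_div ha' hb' hab' hr
  have hcancel : (a + a') / (b + b') * b + (a + a') / (b + b') * b' = a + a' := by field_simp
  linarith

variable [Fintype X]

theorem sum_sub_sum_le_relEnt {p q : X → ℝ} (hp : 0 ≤ p) (hq : 0 ≤ q) (h : AbsCont p q) :
    ∑ x, p x - ∑ x, q x ≤ relEnt p q := by
  rw [← Finset.sum_sub_distrib]
  refine Finset.sum_le_sum fun x _ => ?_
  simpa using mul_log_add_sub_le_mul_log_div (hp x) (hq x) (h x) one_pos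

theorem relEnt_smul (s : ℝ) (p q : X → ℝ) : relEnt (s • p) (s • q) = s * relEnt p q := by
  rcases eq_or_ne s 0 with rfl | hs
  · simp [relEnt]
  · simp [relEnt, Finset.mul_sum, mul_assoc, mul_div_mul_left _ _ hs]

theorem relEnt_add_le {p p' q q' : X → ℝ} (hp : 0 ≤ p) (hq : 0 ≤ q) (hp' : 0 ≤ p') (hq' : 0 ≤ q')
    (h : AbsCont p q) (h' : AbsCont p' q') :
    relEnt (p + p') (q + q') ≤ relEnt p q + relEnt p' q' := by
  rw [relEnt, relEnt, relEnt, ← Finset.sum_add_distrib]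
  exact Finset.sum_le_sum fun x _ =>
    add_mul_log_div_le (hp x) (hq x) (hp' x) (hq' x) (h x) (h' x)

theorem continuous_sum_mul_log : Continuous fun p : X → ℝ => ∑ x, p x * Real.log (p x) :=
  continuous_finsetSum _ fun x _ => Real.continuous_mul_log.comp (continuous_apply x)

end RelativeEntropy

section JointLaw

variable {A B : Type*}

/-- The product `(a, b) ↦ r a * c b` of two vectors. -/
def prodVec (r : A → ℝ) (c : B → ℝ) : A × B → ℝ := fun z => r z.1 * c z.2

theorem prodVec_nonneg {r : A → ℝ} {c : B → ℝ} (hr : 0 ≤ r) (hc : 0 ≤ c) : 0 ≤ prodVec r c :=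
  fun z => mul_nonneg (hr z.1) (hc z.2)

/-- First marginal of a joint law. -/
def fstMarginal [Fintype B] (J : A × B → ℝ) : A → ℝ := fun a => ∑ b, J (a, b)

/-- Second marginal of a joint law. -/
def sndMarginal [Fintype A] (J : A × B → ℝ) : B → ℝ := fun b => ∑ a, J (a, b)

theorem fstMarginal_nonneg [Fintype B] {J : A × B → ℝ} (hJ : 0 ≤ J) : 0 ≤ fstMarginal J :=
  fun _ => Finset.sum_nonneg fun _ _ => hJ _

theorem sndMarginal_nonneg [Fintype A] {J : A × B → ℝ} (hJ : 0 ≤ J) : 0 ≤ sndMarginal J :=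
  fun _ => Finset.sum_nonneg fun _ _ => hJ _

theorem absCont_fstMarginal [Fintype B] {J : A × B → ℝ} (hJ : 0 ≤ J) (b : B) :
    AbsCont (fun a => J (a, b)) (fstMarginal J) := fun a ha =>
  congrFun ((Fintype.sum_eq_zero_iff_of_nonneg fun b => hJ (a, b)).mp ha) b

theorem absCont_sndMarginal [Fintype A] {J : A × B → ℝ} (hJ : 0 ≤ J) (a : A) :
    AbsCont (fun b => J (a, b)) (sndMarginal J) := fun b hb =>
  congrFun ((Fintype.sum_eq_zero_iff_of_nonneg fun a => hJ (a, b)).mp hb) a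

variable [Fintype A] [Fintype B]

/-- Mutual information of the two coordinates of a joint law. -/
def mutualInfo (J : A × B → ℝ) : ℝ := relEnt J (prodVec (fstMarginal J) (sndMarginal J))

theorem sum_fstMarginal_mul (J : A × B → ℝ) (F : A → ℝ) :
    ∑ a, fstMarginal J a * F a = ∑ z, J z * F z.1 := by
  simp only [fstMarginal, Fintype.sum_prod_type, Finset.sum_mul]

theorem sum_sndMarginal_mul (J : A × B → ℝ) (F : B → ℝ) :
    ∑ b, sndMarginal J b * F b = ∑ z, J z * F z.2 := by
  simp only [sndMarginal, Fintype.sum_prod_type_right, Finset.sum_mul]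

/-- The compensation identity. -/
theorem relEnt_prodVec {J : A × B → ℝ} (hJ : 0 ≤ J) {r : A → ℝ} {c : B → ℝ}
    (hr : AbsCont (fstMarginal J) r) (hc : AbsCont (sndMarginal J) c) :
    relEnt J (prodVec r c)
      = mutualInfo J + relEnt (fstMarginal J) r + relEnt (sndMarginal J) c := by
  rw [mutualInfo, relEnt, relEnt, relEnt, relEnt, sum_fstMarginal_mul, sum_sndMarginal_mul,
    ← Finset.sum_add_distrib, ← Finset.sum_add_distrib]
  refine Finset.sum_congr rfl fun z _ => ?_
  rcases eq_or_ne (J z) 0 with hz | hz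
  · simp [hz]
  have hf : fstMarginal J z.1 ≠ 0 := mt (absCont_fstMarginal hJ z.2 z.1) hz
  have hs : sndMarginal J z.2 ≠ 0 := mt (absCont_sndMarginal hJ z.1 z.2) hz
  have hr0 : r z.1 ≠ 0 := mt (hr z.1) hf
  have hc0 : c z.2 ≠ 0 := mt (hc z.2) hs
  simp only [prodVec]
  rw [Real.log_div hz (mul_ne_zero hr0 hc0), Real.log_div hz (mul_ne_zero hf hs),
    Real.log_mul hr0 hc0, Real.log_mul hf hs, Real.log_div hf hr0, Real.log_div hs hc0]
  ring

theorem mutualInfo_le_relEnt_prodVec {J : A × B → ℝ} (hJ : 0 ≤ J) {r : A → ℝ} {c : B → ℝ}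
    (hr0 : 0 ≤ r) (hc0 : 0 ≤ c) (hr : AbsCont (fstMarginal J) r) (hc : AbsCont (sndMarginal J) c)
    (hrJ : ∑ a, r a ≤ ∑ z, J z) (hcJ : ∑ b, c b ≤ ∑ z, J z) :
    mutualInfo J ≤ relEnt J (prodVec r c) := by
  have hfst : ∑ a, fstMarginal J a = ∑ z, J z := by simpa using sum_fstMarginal_mul J 1
  have hsnd : ∑ b, sndMarginal J b = ∑ z, J z := by simpa using sum_sndMarginal_mul J 1
  have := sum_sub_sum_le_relEnt (fstMarginal_nonneg hJ) hr0 hr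
  have := sum_sub_sum_le_relEnt (sndMarginal_nonneg hJ) hc0 hc
  linarith [relEnt_prodVec hJ hr hc]

/-- The entropy form in which the relative entropy is visibly continuous in `J`. -/
theorem relEnt_prodVec_fstMarginal {J : A × B → ℝ} (hJ : 0 ≤ J) {c : B → ℝ}
    (hc : AbsCont (sndMarginal J) c) :
    relEnt J (prodVec (fstMarginal J) c)
      = ∑ z, J z * Real.log (J z) - ∑ a, fstMarginal J a * Real.log (fstMarginal J a)
        - ∑ b, sndMarginal J b * Real.log (c b) := by
  rw [relEnt, sum_fstMarginal_mul J fun a => Real.log (fstMarginal J a),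
    sum_sndMarginal_mul J fun b => Real.log (c b), ← Finset.sum_sub_distrib,
    ← Finset.sum_sub_distrib]
  refine Finset.sum_congr rfl fun z _ => ?_
  rcases eq_or_ne (J z) 0 with hz | hz
  · simp [hz]
  have hf : fstMarginal J z.1 ≠ 0 := mt (absCont_fstMarginal hJ z.2 z.1) hz
  have hc0 : c z.2 ≠ 0 := mt (fun h => absCont_sndMarginal hJ z.1 z.2 (hc z.2 h)) hz
  rw [prodVec, Real.log_div hz (mul_ne_zero hf hc0), Real.log_mul hf hc0]
  ring

theorem continuousOn_relEnt_prodVec_fstMarginal (c : B → ℝ) :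
    ContinuousOn (fun J : A × B → ℝ => relEnt J (prodVec (fstMarginal J) c))
      {J | 0 ≤ J ∧ AbsCont (sndMarginal J) c} := by
  have hfst : Continuous (fstMarginal : (A × B → ℝ) → A → ℝ) := by
    unfold fstMarginal; fun_prop
  have hsnd : Continuous fun J : A × B → ℝ => ∑ b, sndMarginal J b * Real.log (c b) := by
    unfold sndMarginal; fun_prop
  have hentropies := continuous_sum_mul_log.sub (continuous_sum_mul_log.comp hfst)
  exact (hentropies.sub hsnd).continuousOn.congr fun J hJ => relEnt_prodVec_fstMarginal hJ.1 hJ.2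

end JointLaw

section ExtendedKL

variable {ι X : Type*} [Fintype ι] [Fintype X]

theorem ereal_coe_sum (f : ι → ℝ) : ((∑ i, f i : ℝ) : EReal) = ∑ i, (f i : EReal) :=
  map_sum (⟨⟨Real.toEReal, EReal.coe_zero⟩, EReal.coe_add⟩ : ℝ →+ EReal) f Finset.univ

theorem KL_of_absCont {p q : X → ℝ} (h : AbsCont p q) : KL p q = relEnt p q :=
  if_pos h

theorem KL_of_not_absCont {p q : X → ℝ} (h : ¬AbsCont p q) : KL p q = ⊤ :=
  if_neg h

theorem KL_ne_bot (p q : X → ℝ) : KL p q ≠ ⊥ := by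
  by_cases h : AbsCont p q
  · simp [KL_of_absCont h]
  · simp [KL_of_not_absCont h]

theorem sum_coe_mul_KL {P Q : ι → X → ℝ} (w : ι → ℝ) (h : ∀ i, AbsCont (P i) (Q i)) :
    ∑ i, (w i : EReal) * KL (P i) (Q i) = ((∑ i, w i * relEnt (P i) (Q i) : ℝ) : EReal) := by
  simp only [KL_of_absCont (h _), ereal_coe_sum, EReal.coe_mul]

theorem sum_coe_mul_KL_eq_top {P Q : ι → X → ℝ} {w : ι → ℝ} (hw : 0 ≤ w) {i : ι} (hi : 0 < w i)
    (h : ¬AbsCont (P i) (Q i)) : ∑ i, (w i : EReal) * KL (P i) (Q i) = ⊤ := by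
  classical
  have hterm : ∀ j, (w j : EReal) * KL (P j) (Q j) ≠ ⊥ := fun j =>
    (EReal.mul_ne_bot _ _).mpr ⟨by simp, .inr (KL_ne_bot _ _), by simp, .inl (by simpa using hw j)⟩
  have hrest : ∑ j ∈ Finset.univ.erase i, (w j : EReal) * KL (P j) (Q j) ≠ ⊥ := fun hbot =>
    let ⟨j, _, hj⟩ := WithBot.sum_eq_bot_iff.mp hbot
    hterm j hj
  rw [← Finset.add_sum_erase _ _ (Finset.mem_univ i), KL_of_not_absCont h,
    EReal.coe_mul_top_of_pos hi, EReal.top_add_of_ne_bot hrest]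

theorem sub_inv_mul_top {η : ℝ} (hη : 0 < η) (a : ℝ) :
    (a : EReal) - ((η⁻¹ : ℝ) : EReal) * ⊤ = ⊥ := by
  rw [EReal.coe_mul_top_of_pos (inv_pos.mpr hη), EReal.sub_top]

end ExtendedKL

section Pushforward

variable {X I : Type*} [Fintype X]

open Classical in
/-- Pushforward of a vector along `k`: the coordinate at `i` is the total weight of the fiber over
`i`. -/
def pushforward (k : X → I) (w : X → ℝ) : I → ℝ := fun i => ∑ x, if k x = i then w x else 0

theorem pushforward_nonneg (k : X → I) {w : X → ℝ} (hw : 0 ≤ w) : 0 ≤ pushforward k w :=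
  fun i => Finset.sum_nonneg fun x _ => by split_ifs; exacts [hw x, le_rfl]

theorem eq_zero_of_pushforward_eq_zero (k : X → I) {w : X → ℝ} (hw : 0 ≤ w) {x : X}
    (h : pushforward k w (k x) = 0) : w x = 0 := by
  classical
  rw [pushforward, Finset.sum_eq_zero_iff_of_nonneg fun y _ => by
    split_ifs; exacts [hw y, le_rfl]] at h
  simpa using h x (Finset.mem_univ x)

theorem exists_of_pushforward_ne_zero {k : X → I} {w : X → ℝ} {i : I}
    (h : pushforward k w i ≠ 0) : ∃ x, k x = i ∧ w x ≠ 0 := by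
  obtain ⟨x, -, hx⟩ := Finset.exists_ne_zero_of_sum_ne_zero h
  exact ⟨x, by simpa using hx⟩

theorem pushforward_of_forall {k : X → I} {w : X → ℝ} {i : I} (h : ∀ x, w x ≠ 0 → k x = i) :
    pushforward k w i = ∑ x, w x := by
  refine Finset.sum_congr rfl fun x _ => ?_
  grind

theorem sum_pushforward_mul [Fintype I] (k : X → I) (w : X → ℝ) (F : I → ℝ) :
    ∑ i, pushforward k w i * F i = ∑ x, w x * F (k x) := by
  classical
  simp only [pushforward, Finset.sum_mul]
  rw [Finset.sum_comm]
  simp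

theorem sum_pushforward [Fintype I] (k : X → I) (w : X → ℝ) :
    ∑ i, pushforward k w i = ∑ x, w x := by
  simpa using sum_pushforward_mul k w 1

end Pushforward

namespace FDist

variable {X Y I : Type*} [Fintype X]

/-- Image distribution. -/
def map [Fintype Y] (f : X → Y) (μ : FDist X) : FDist Y where
  p := pushforward f μ.p
  nonneg := pushforward_nonneg f μ.nonneg
  sum_one := by rw [sum_pushforward, μ.sum_one]

theorem sum_map_mul [Fintype Y] (f : X → Y) (μ : FDist X) (F : Y → ℝ) :
    ∑ y, (μ.map f).p y * F y = ∑ x, μ.p x * F (f x) :=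
  sum_pushforward_mul f μ.p F

theorem exists_of_map_ne_zero [Fintype Y] {f : X → Y} {μ : FDist X} {y : Y}
    (h : (μ.map f).p y ≠ 0) : ∃ x, f x = y ∧ μ.p x ≠ 0 :=
  exists_of_pushforward_ne_zero h

theorem exists_pos (μ : FDist X) : ∃ x, 0 < μ.p x := by
  obtain ⟨x, -, hx⟩ := Finset.exists_ne_zero_of_sum_ne_zero (μ.sum_one.trans_ne one_ne_zero)
  exact ⟨x, (μ.nonneg x).lt_of_ne' hx⟩

theorem sum_mul_const (μ : FDist X) (t : ℝ) : ∑ x, μ.p x * t = t := by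
  rw [← Finset.sum_mul, μ.sum_one, one_mul]

theorem exists_pos_sum_mul_le (μ : FDist X) (F : X → ℝ) :
    ∃ x, 0 < μ.p x ∧ ∑ y, μ.p y * F y ≤ F x := by
  by_contra! hlt
  obtain ⟨x, hx⟩ := μ.exists_pos
  have : ∑ y, μ.p y * F y < ∑ y, μ.p y * ∑ z, μ.p z * F z :=
    Finset.sum_lt_sum (fun y _ => by
      rcases (μ.nonneg y).eq_or_lt with hy | hy
      · simp [← hy]
      · exact mul_le_mul_of_nonneg_left (hlt y hy).le hy.le)
      ⟨x, Finset.mem_univ x, mul_lt_mul_of_pos_left (hlt x hx) hx⟩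
  exact this.ne (μ.sum_mul_const _).symm

open Classical in
/-- The conditional distribution of `μ` given `k = i`; by convention it is `μ` itself when the
event has mass zero. -/
def cond (μ : FDist X) (k : X → I) (i : I) : FDist X :=
  if h : pushforward k μ.p i = 0 then μ else
    { p := fun x => (if k x = i then μ.p x else 0) / pushforward k μ.p i
      nonneg := fun x => div_nonneg (by split_ifs; exacts [μ.nonneg x, le_rfl])
        (pushforward_nonneg k μ.nonneg i)
      sum_one := by rw [← Finset.sum_div, ← pushforward, div_self h] }

theorem eq_of_cond_ne_zero {μ : FDist X} {k : X → I} {i : I} (hi : pushforward k μ.p i ≠ 0)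
    {x : X} (hx : (μ.cond k i).p x ≠ 0) : k x = i := by
  rw [cond, dif_neg hi] at hx
  by_contra hne
  simp [hne] at hx

theorem pushforward_mul_cond (μ : FDist X) (k : X → I) (i : I) (F : X → ℝ) :
    pushforward k (fun x => μ.p x * F x) i
      = pushforward k μ.p i * ∑ x, (μ.cond k i).p x * F x := by
  classical
  by_cases hi : pushforward k μ.p i = 0
  · rw [hi, zero_mul]
    refine Finset.sum_eq_zero fun x _ => ?_
    split_ifs with hx
    · exact mul_eq_zero_of_left (eq_zero_of_pushforward_eq_zero k μ.nonneg (hx ▸ hi)) _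
    · rfl
  · rw [Finset.mul_sum, cond, dif_neg hi]
    refine Finset.sum_congr rfl fun x _ => ?_
    by_cases hx : k x = i
    · simp only [hx, if_true]
      field_simp
    · simp [hx]

theorem cond_of_forall {μ : FDist X} {k : X → I} {i : I} (h : ∀ x, μ.p x ≠ 0 → k x = i) :
    μ.cond k i = μ := by
  have hmass : pushforward k μ.p i = 1 := (pushforward_of_forall h).trans μ.sum_one
  rw [cond, dif_neg (by simp [hmass])]
  congr with x
  grind

end FDist

section Payoffs

variable {Pol Obs Mod I : Type*} [Fintype Pol] [Fintype Mod]

/-- Joint law of the cell of `(M, π⋆) ∼ ν` and the observation `o ∼ M(·|π)`. -/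
def jointLaw (q : Mod → Pol → Obs → ℝ) (k : Mod × Pol → I) (ν : Mod × Pol → ℝ) (π : Pol) :
    I × Obs → ℝ :=
  fun z => pushforward k (fun x => ν x * q x.1 π z.2) z.1

/-- Expected regret of `π` against the comparator of `(M, π⋆) ∼ ν`. -/
def regret (V : Mod → Pol → ℝ) (ν : Mod × Pol → ℝ) (π : Pol) : ℝ :=
  ∑ x : Mod × Pol, ν x * (V x.1 x.2 - V x.1 π)

/-- Payoff of the game underlying `AIR` when the posterior over cells is compared to its prior and
the observations are compared to the reference `c`. -/
def airPayoff [Fintype Obs] [Fintype I] (q : Mod → Pol → Obs → ℝ) (V : Mod → Pol → ℝ)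
    (k : Mod × Pol → I) (η : ℝ) (c : Pol → Obs → ℝ) (ν : Mod × Pol → ℝ) (π : Pol) : ℝ :=
  regret V ν π - η⁻¹ * relEnt (jointLaw q k ν π) (prodVec (pushforward k ν) (c π))

/-- Payoff of the game underlying `DECbar`, with reference observation laws `c`. -/
def decPayoff [Fintype Obs] (q : Mod → Pol → Obs → ℝ) (V : Mod → Pol → ℝ) (η : ℝ)
    (c : Pol → Obs → ℝ) (μ : Mod → ℝ) (π : Pol) : ℝ :=
  (⨆ π' : Pol, ∑ m, μ m * V m π') - (∑ m, μ m * V m π) - η⁻¹ * relEnt (mixObs q μ π) (c π)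

variable {q : Mod → Pol → Obs → ℝ} (V : Mod → Pol → ℝ) {k : Mod × Pol → I} {η : ℝ}
  {ν : Mod × Pol → ℝ}

theorem pairMixObs_nonneg (hq : ∀ m π o, 0 ≤ q m π o) (hν : 0 ≤ ν) (π : Pol) :
    0 ≤ pairMixObs q ν π :=
  fun o => Finset.sum_nonneg fun x _ => mul_nonneg (hν x) (hq x.1 π o)

theorem jointLaw_nonneg (hq : ∀ m π o, 0 ≤ q m π o) (hν : 0 ≤ ν) (π : Pol) :
    0 ≤ jointLaw q k ν π :=
  fun z => pushforward_nonneg k (fun x => mul_nonneg (hν x) (hq x.1 π z.2)) z.1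

theorem sndMarginal_jointLaw [Fintype I] (q : Mod → Pol → Obs → ℝ) (k : Mod × Pol → I)
    (ν : Mod × Pol → ℝ) (π : Pol) : sndMarginal (jointLaw q k ν π) = pairMixObs q ν π :=
  funext fun o => sum_pushforward k fun x => ν x * q x.1 π o

theorem post_some [DecidableEq I] (q : Mod → Pol → Obs → ℝ) (k : Mod × Pol → I) (ν : Mod × Pol → ℝ)
    (π : Pol) (o : Obs) :
    post q (fun x => some (k x)) ν π o
      = fun i => jointLaw q k ν π (i, o) / pairMixObs q ν π o := by
  funext i
  simp only [post, jointLaw, pushforward, pairMixObs, Option.some.injEq]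

variable [Fintype Obs]

theorem fstMarginal_jointLaw (hq : ∀ m π, ∑ o, q m π o = 1) (π : Pol) :
    fstMarginal (jointLaw q k ν π) = pushforward k ν := by
  classical
  funext i
  simp only [fstMarginal, jointLaw, pushforward]
  rw [Finset.sum_comm]
  refine Finset.sum_congr rfl fun x _ => ?_
  split_ifs
  · rw [← Finset.mul_sum, hq, mul_one]
  · exact Finset.sum_const_zero

theorem sum_pairMixObs (hq : ∀ m π, ∑ o, q m π o = 1) (π : Pol) :
    ∑ o, pairMixObs q ν π o = ∑ x, ν x := by
  simp only [pairMixObs]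
  rw [Finset.sum_comm]
  simp only [← Finset.mul_sum, hq, mul_one]

variable [Fintype I]

theorem sum_jointLaw (hq : ∀ m π, ∑ o, q m π o = 1) (π : Pol) :
    ∑ z, jointLaw q k ν π z = ∑ x, ν x := by
  rw [← sum_pairMixObs hq π, ← sndMarginal_jointLaw q k]
  simpa using (sum_sndMarginal_mul (jointLaw q k ν π) 1).symm

theorem airPayoff_pairMixObs (hq : ∀ m π, ∑ o, q m π o = 1) (π : Pol) :
    airPayoff q V k η (pairMixObs q ν) ν π
      = regret V ν π - η⁻¹ * mutualInfo (jointLaw q k ν π) := by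
  rw [airPayoff, mutualInfo, fstMarginal_jointLaw hq, sndMarginal_jointLaw]

theorem mutualInfo_jointLaw_le (hq : ∀ m π o, 0 ≤ q m π o) (hq1 : ∀ m π, ∑ o, q m π o = 1)
    (hν : ν ∈ stdSimplex ℝ (Mod × Pol)) {π : Pol} {ρ : I → ℝ} {d : Obs → ℝ}
    (hρ : AbsCont (pushforward k ν) ρ) (hd : AbsCont (pairMixObs q ν π) d) (hρ0 : 0 ≤ ρ)
    (hd0 : 0 ≤ d) (hρ1 : ∑ i, ρ i ≤ 1) (hd1 : ∑ o, d o ≤ 1) :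
    mutualInfo (jointLaw q k ν π) ≤ relEnt (jointLaw q k ν π) (prodVec ρ d) := by
  refine mutualInfo_le_relEnt_prodVec (jointLaw_nonneg hq hν.1 π) hρ0 hd0 ?_ ?_ ?_ ?_
  · rwa [fstMarginal_jointLaw hq1]
  · rwa [sndMarginal_jointLaw]
  · rwa [sum_jointLaw hq1, hν.2]
  · rwa [sum_jointLaw hq1, hν.2]

variable [DecidableEq I]

theorem sum_mul_relEnt_post (hq : ∀ m π o, 0 ≤ q m π o) (hν : 0 ≤ ν) (ρ : I → ℝ) (π : Pol) :
    ∑ x : Mod × Pol, ∑ o, ν x * q x.1 π o * relEnt (post q (fun x => some (k x)) ν π o) ρ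
      = relEnt (jointLaw q k ν π) (prodVec ρ (pairMixObs q ν π)) := by
  rw [Finset.sum_comm, relEnt, Fintype.sum_prod_type_right]
  refine Finset.sum_congr rfl fun o _ => ?_
  rw [← Finset.sum_mul, relEnt, Finset.mul_sum, post_some]
  refine Finset.sum_congr rfl fun i _ => ?_
  change pairMixObs q ν π o * _ = _
  rcases eq_or_ne (pairMixObs q ν π o) 0 with hzero | hne
  · have hJ : jointLaw q k ν π (i, o) = 0 :=
      absCont_sndMarginal (jointLaw_nonneg hq hν π) i o (by rwa [sndMarginal_jointLaw])
    simp [hzero, hJ]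
  · rw [prodVec, div_div, mul_comm (ρ i), ← mul_assoc, mul_div_cancel₀ _ hne]

theorem AIR_eq_of_absCont (hq : ∀ m π o, 0 ≤ q m π o) (hq1 : ∀ m π, ∑ o, q m π o = 1)
    (hν : 0 ≤ ν) {ρ : I → ℝ} (hρ : AbsCont (pushforward k ν) ρ) (p : Pol → ℝ) :
    AIR q V (fun x => some (k x)) η ρ p ν
      = ((∑ π, p π * (regret V ν π
          - η⁻¹ * relEnt (jointLaw q k ν π) (prodVec ρ (pairMixObs q ν π))) : ℝ) : EReal) := by
  have hpost : ∀ π o, AbsCont (post q (fun x => some (k x)) ν π o) ρ := fun π o i hi => by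
    have hfst := absCont_fstMarginal (jointLaw_nonneg (k := k) hq hν π) o i
    rw [fstMarginal_jointLaw hq1] at hfst
    simp [post_some, hfst (hρ i hi)]
  have hregret : ∑ π, ∑ x : Mod × Pol, p π * ν x * (V x.1 x.2 - V x.1 π)
      = ∑ π, p π * regret V ν π := by
    simp only [regret, Finset.mul_sum, mul_assoc]
  have hinfo : ∑ π, ∑ x : Mod × Pol, ∑ o, p π * ν x * q x.1 π o
        * relEnt (post q (fun x => some (k x)) ν π o) ρ
      = ∑ π, p π * relEnt (jointLaw q k ν π) (prodVec ρ (pairMixObs q ν π)) := by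
    simp only [← sum_mul_relEnt_post hq hν ρ, Finset.mul_sum, mul_assoc]
  simp only [AIR, KL_of_absCont (hpost _ _), ← EReal.coe_mul, ← ereal_coe_sum, ← EReal.coe_sub,
    hregret, hinfo]
  simp only [mul_sub, Finset.sum_sub_distrib, Finset.mul_sum, mul_left_comm]

theorem AIR_eq_bot_of_not_absCont (hq : ∀ m π o, 0 ≤ q m π o) (hq1 : ∀ m π, ∑ o, q m π o = 1)
    (hη : 0 < η) (hν : 0 ≤ ν) {ρ : I → ℝ} (hρ : ¬AbsCont (pushforward k ν) ρ) (p : FDist Pol) :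
    AIR q V (fun x => some (k x)) η ρ p.p ν = ⊥ := by
  simp only [AbsCont, not_forall] at hρ
  obtain ⟨i, hi, hne⟩ := hρ
  obtain ⟨x, rfl, hx⟩ := exists_of_pushforward_ne_zero hne
  obtain ⟨π, hπ⟩ := p.exists_pos
  obtain ⟨o, ho⟩ := FDist.exists_pos ⟨q x.1 π, hq x.1 π, hq1 x.1 π⟩
  have hweight : 0 < ν x * q x.1 π o := mul_pos ((hν x).lt_of_ne' hx) ho
  have hpost : ¬AbsCont (post q (fun x => some (k x)) ν π o) ρ := fun hac => by
    have hJ : jointLaw q k ν π (k x, o) ≠ 0 := fun h0 =>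
      hweight.ne' (eq_zero_of_pushforward_eq_zero k
        (fun y => mul_nonneg (hν y) (hq y.1 π o)) h0)
    have hZ := mt (absCont_sndMarginal (jointLaw_nonneg hq hν π) (k x) o) hJ
    rw [sndMarginal_jointLaw] at hZ
    exact div_ne_zero hJ hZ (by simpa [post_some] using hac _ hi)
  have htop := sum_coe_mul_KL_eq_top (ι := Pol × (Mod × Pol) × Obs)
    (P := fun j => post q (fun x => some (k x)) ν j.1 j.2.2) (Q := fun _ => ρ)
    (w := fun j => p.p j.1 * ν j.2.1 * q j.2.1.1 j.1 j.2.2) (i := (π, x, o))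
    (fun j => mul_nonneg (mul_nonneg (p.nonneg _) (hν _)) (hq _ _ _))
    (by rw [mul_assoc]; exact mul_pos hπ hweight) hpost
  rw [Fintype.sum_prod_type] at htop
  simp only [Fintype.sum_prod_type (α₂ := Obs)] at htop
  rw [AIR, htop, sub_inv_mul_top hη]

theorem AIR_le_sum_airPayoff (hq : ∀ m π o, 0 ≤ q m π o) (hq1 : ∀ m π, ∑ o, q m π o = 1)
    (hη : 0 < η) (ρ : FDist I) (p : FDist Pol) (ν : FDist (Mod × Pol)) :
    AIR q V (fun x => some (k x)) η ρ.p p.p ν.p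
      ≤ ((∑ π, p.p π * airPayoff q V k η (pairMixObs q ν.p) ν.p π : ℝ) : EReal) := by
  by_cases hρ : AbsCont (pushforward k ν.p) ρ.p
  · rw [AIR_eq_of_absCont V hq hq1 ν.nonneg hρ, EReal.coe_le_coe_iff]
    refine Finset.sum_le_sum fun π _ => mul_le_mul_of_nonneg_left ?_ (p.nonneg π)
    rw [airPayoff_pairMixObs V hq1]
    gcongr
    exact mutualInfo_jointLaw_le hq hq1 ⟨ν.nonneg, ν.sum_one⟩ hρ (AbsCont.refl _) ρ.nonneg
      (pairMixObs_nonneg hq ν.nonneg π) ρ.sum_one.le (by rw [sum_pairMixObs hq1, ν.sum_one])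
  · rw [AIR_eq_bot_of_not_absCont V hq hq1 hη ν.nonneg hρ]
    exact bot_le

theorem AIR_map_eq_sum_airPayoff (hq : ∀ m π o, 0 ≤ q m π o) (hq1 : ∀ m π, ∑ o, q m π o = 1)
    (p : Pol → ℝ) (ν : FDist (Mod × Pol)) :
    AIR q V (fun x => some (k x)) η (ν.map k).p p ν.p
      = ((∑ π, p π * airPayoff q V k η (pairMixObs q ν.p) ν.p π : ℝ) : EReal) :=
  AIR_eq_of_absCont V hq hq1 ν.nonneg (AbsCont.refl _) p

end Payoffs

section Cells

variable {Pol Obs Mod I : Type*} [Fintype Pol] [Fintype Mod]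
  {q : Mod → Pol → Obs → ℝ} {V : Mod → Pol → ℝ} {k : Mod × Pol → I} {η : ℝ}

theorem jointLaw_eq_mul_cond (ν : FDist (Mod × Pol)) (π : Pol) (i : I) (o : Obs) :
    jointLaw q k ν.p π (i, o) = pushforward k ν.p i * pairMixObs q (ν.cond k i).p π o :=
  ν.pushforward_mul_cond k i fun x => q x.1 π o

theorem mixObs_map_fst (q : Mod → Pol → Obs → ℝ) (ν : FDist (Mod × Pol)) :
    mixObs q (ν.map Prod.fst).p = pairMixObs q ν.p :=
  funext fun π => funext fun o => ν.sum_map_mul Prod.fst fun m => q m π o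

theorem pairMixObs_map_prodMk (q : Mod → Pol → Obs → ℝ) (μ : FDist Mod) (π' : Pol) :
    pairMixObs q (μ.map fun m => (m, π')).p = mixObs q μ.p :=
  funext fun π => funext fun o => μ.sum_map_mul (·, π') fun x => q x.1 π o

theorem regret_map_prodMk (V : Mod → Pol → ℝ) (μ : FDist Mod) (π' π : Pol) :
    regret V (μ.map fun m => (m, π')).p π = ∑ m, μ.p m * V m π' - ∑ m, μ.p m * V m π := by
  rw [regret, μ.sum_map_mul (·, π') fun x => V x.1 x.2 - V x.1 π]
  simp only [mul_sub, Finset.sum_sub_distrib]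

theorem regret_le_of_comparator {ν : FDist (Mod × Pol)} {π' : Pol}
    (h : ∀ x, ν.p x ≠ 0 → x.2 = π') (π : Pol) :
    regret V ν.p π ≤ (⨆ π', ∑ m, (ν.map Prod.fst).p m * V m π')
      - ∑ m, (ν.map Prod.fst).p m * V m π := by
  calc regret V ν.p π
      = ∑ x, ν.p x * V x.1 π' - ∑ x, ν.p x * V x.1 π := by
        rw [regret, ← Finset.sum_sub_distrib]
        refine Finset.sum_congr rfl fun x _ => ?_
        rcases eq_or_ne (ν.p x) 0 with hx | hx
        · simp [hx]
        · rw [h x hx, mul_sub]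
    _ = ∑ m, (ν.map Prod.fst).p m * V m π' - ∑ m, (ν.map Prod.fst).p m * V m π := by
        rw [ν.sum_map_mul Prod.fst (V · π'), ν.sum_map_mul Prod.fst (V · π)]
    _ ≤ _ := by
        gcongr
        exact le_ciSup (f := fun π' => ∑ m, (ν.map Prod.fst).p m * V m π')
          (Set.finite_range _).bddAbove π'

variable [Fintype Obs] [Fintype I]

theorem airPayoff_eq_sum_cond (c : Pol → Obs → ℝ) (ν : FDist (Mod × Pol)) (π : Pol) :
    airPayoff q V k η c ν.p π = ∑ i, pushforward k ν.p i * (regret V (ν.cond k i).p π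
      - η⁻¹ * relEnt (pairMixObs q (ν.cond k i).p π) (c π)) := by
  have hregret : regret V ν.p π = ∑ i, pushforward k ν.p i * regret V (ν.cond k i).p π := by
    simp only [regret, ← ν.pushforward_mul_cond, sum_pushforward]
  have hinfo : relEnt (jointLaw q k ν.p π) (prodVec (pushforward k ν.p) (c π))
      = ∑ i, pushforward k ν.p i * relEnt (pairMixObs q (ν.cond k i).p π) (c π) := by
    simp only [← relEnt_smul]
    simp only [relEnt, Fintype.sum_prod_type, jointLaw_eq_mul_cond, prodVec, Pi.smul_apply,
      smul_eq_mul]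
  rw [airPayoff, hregret, hinfo]
  simp only [mul_sub, Finset.sum_sub_distrib, Finset.mul_sum, mul_left_comm]

theorem airPayoff_of_cell (c : Pol → Obs → ℝ) {ν : FDist (Mod × Pol)} {i : I}
    (h : ∀ x, ν.p x ≠ 0 → k x = i) (π : Pol) :
    airPayoff q V k η c ν.p π = regret V ν.p π - η⁻¹ * relEnt (pairMixObs q ν.p π) (c π) := by
  rw [airPayoff_eq_sum_cond, Finset.sum_eq_single i, FDist.cond_of_forall h,
    pushforward_of_forall h, ν.sum_one, one_mul]
  · intro j _ hji
    have hmass : pushforward k ν.p j = 0 := by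
      by_contra hne
      obtain ⟨x, hxj, hx⟩ := exists_of_pushforward_ne_zero hne
      exact hji (hxj.symm.trans (h x hx))
    rw [hmass, zero_mul]
  · simp

theorem exists_cell_sum_airPayoff_le (hk : ∀ x y, k x = k y → x.2 = y.2)
    (hq : ∀ m π o, 0 ≤ q m π o) (p : FDist Pol) (ν : FDist (Mod × Pol)) :
    ∃ i, ∃ μ : FDist Mod, (∀ m, μ.p m ≠ 0 → ∃ π, k (m, π) = i) ∧
      (∀ π, AbsCont (mixObs q μ.p π) (pairMixObs q ν.p π)) ∧
      ∑ π, p.p π * airPayoff q V k η (pairMixObs q ν.p) ν.p π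
        ≤ ∑ π, p.p π * decPayoff q V η (pairMixObs q ν.p) μ.p π := by
  obtain ⟨i, hi, hle⟩ := (ν.map k).exists_pos_sum_mul_le fun i => ∑ π, p.p π *
    (regret V (ν.cond k i).p π
      - η⁻¹ * relEnt (pairMixObs q (ν.cond k i).p π) (pairMixObs q ν.p π))
  have hcell : ∀ x, (ν.cond k i).p x ≠ 0 → k x = i := fun x => FDist.eq_of_cond_ne_zero hi.ne'
  refine ⟨i, (ν.cond k i).map Prod.fst, fun m hm => ?_, fun π o ho => ?_, ?_⟩
  · obtain ⟨x, rfl, hx⟩ := FDist.exists_of_map_ne_zero hm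
    exact ⟨x.2, hcell x hx⟩
  · have hJ := absCont_sndMarginal (jointLaw_nonneg (k := k) hq ν.nonneg π) i o
      (by rwa [sndMarginal_jointLaw])
    rw [mixObs_map_fst]
    exact (mul_eq_zero.mp ((jointLaw_eq_mul_cond ν π i o).symm.trans hJ)).resolve_left hi.ne'
  · obtain ⟨x, hx⟩ := (ν.cond k i).exists_pos
    calc ∑ π, p.p π * airPayoff q V k η (pairMixObs q ν.p) ν.p π
        = ∑ i, (ν.map k).p i * ∑ π, p.p π * (regret V (ν.cond k i).p π
            - η⁻¹ * relEnt (pairMixObs q (ν.cond k i).p π) (pairMixObs q ν.p π)) := by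
          simp only [airPayoff_eq_sum_cond, Finset.mul_sum, FDist.map]
          rw [Finset.sum_comm]
          simp only [mul_left_comm]
      _ ≤ _ := hle
      _ ≤ ∑ π, p.p π * decPayoff q V η (pairMixObs q ν.p) ((ν.cond k i).map Prod.fst).p π := by
          refine Finset.sum_le_sum fun π _ => mul_le_mul_of_nonneg_left ?_ (p.nonneg π)
          rw [decPayoff, mixObs_map_fst]
          gcongr
          exact regret_le_of_comparator
            (fun y hy => hk y x ((hcell y hy).trans (hcell x hx.ne').symm)) π

end Cells

section Minimax

variable {E P : Type*} [Fintype P] {S : Set E} {H : E → P → ℝ} {t₀ t : ℝ}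

theorem concaveOn_sum_mul [AddCommGroup E] [Module ℝ E] (hconv : Convex ℝ S)
    (hconc : ∀ π, ConcaveOn ℝ S (H · π)) {p : P → ℝ} (hp : 0 ≤ p) :
    ConcaveOn ℝ S fun x => ∑ π, p π * H x π := by
  refine ⟨hconv, fun x hx y hy a b ha hb hab => ?_⟩
  calc a • ∑ π, p π * H x π + b • ∑ π, p π * H y π
      = ∑ π, p π * (a • H x π + b • H y π) := by
        simp only [smul_eq_mul, mul_add, Finset.sum_add_distrib, Finset.mul_sum, mul_left_comm]
    _ ≤ ∑ π, p π * H (a • x + b • y) π := Finset.sum_le_sum fun π _ =>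
        mul_le_mul_of_nonneg_left ((hconc π).2 hx hy ha hb hab) (hp π)

theorem exists_dist_forall_sum_mul_le [TopologicalSpace E] [AddCommGroup E] [Module ℝ E]
    [IsTopologicalAddGroup E] [ContinuousSMul ℝ E]
    (hne : S.Nonempty) (hconv : Convex ℝ S) (hcomp : IsCompact S)
    (hconc : ∀ π, ConcaveOn ℝ S (H · π)) (hcont : ∀ π, ContinuousOn (H · π) S)
    (ht₀ : ∀ x ∈ S, ∃ π, H x π ≤ t₀) :
    ∃ p : FDist P, ∀ x ∈ S, ∑ π, p.p π * H x π ≤ t₀ := by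
  classical
  obtain ⟨x₀, hx₀⟩ := id hne
  obtain ⟨π₀, -⟩ := ht₀ x₀ hx₀
  have hlinear (x : E) : ConvexOn ℝ (stdSimplex ℝ P) fun p => ∑ π, p π * H x π :=
    (Fintype.linearCombination ℝ (H x)).convexOn (convex_stdSimplex ℝ P)
  obtain ⟨p, hp, y, hy, hsaddle⟩ := Sion.exists_isSaddlePointOn
    (f := fun (p : P → ℝ) x => ∑ π, p π * H x π)
    ⟨_, single_mem_stdSimplex ℝ π₀⟩ (convex_stdSimplex ℝ P) (isCompact_stdSimplex ℝ P)
    (fun x _ => ContinuousOn.lowerSemicontinuousOn (by fun_prop))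
    (fun x _ => (hlinear x).quasiconvexOn) hconv hne hcomp
    (fun p _ => ContinuousOn.upperSemicontinuousOn (by fun_prop))
    (fun p hp => (concaveOn_sum_mul hconv hconc hp.1).quasiconcaveOn)
  obtain ⟨π, hπ⟩ := ht₀ y hy
  refine ⟨⟨p, hp.1, hp.2⟩, fun x hx => (hsaddle _ (single_mem_stdSimplex ℝ π) x hx).trans ?_⟩
  simpa [Pi.single_apply] using hπ

/-- Mixing with the uniform distribution costs arbitrarily little on a compact set. -/
theorem exists_pos_dist_forall_sum_mul_le [TopologicalSpace E] (hcomp : IsCompact S)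
    (hcont : ∀ π, ContinuousOn (H · π) S) {p₀ : FDist P}
    (hp₀ : ∀ x ∈ S, ∑ π, p₀.p π * H x π ≤ t₀) (ht : t₀ < t) :
    ∃ p : FDist P, (∀ π, 0 < p.p π) ∧ ∀ x ∈ S, ∑ π, p.p π * H x π ≤ t := by
  obtain ⟨π₀, -⟩ := p₀.exists_pos
  have : Nonempty P := ⟨π₀⟩
  let u : P → ℝ := fun _ => (Fintype.card P : ℝ)⁻¹
  have hu : u ∈ stdSimplex ℝ P := (stdSimplex.barycenter (𝕜 := ℝ) (X := P)).2
  have hu_pos (π : P) : 0 < u π := inv_pos.mpr (Nat.cast_pos.mpr Fintype.card_pos)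
  obtain ⟨B, hB⟩ := hcomp.bddAbove_image (f := fun x => ∑ π, u π * H x π) (by fun_prop)
  obtain ⟨δ, hδ, hδB⟩ := exists_pos_mul_lt (sub_pos.mpr ht) |B - t₀|
  let ε := min δ 1
  have hε : 0 < ε := lt_min hδ one_pos
  have hε1 : 0 ≤ 1 - ε := sub_nonneg.mpr (min_le_right δ 1)
  have hεB : ε * (B - t₀) ≤ t - t₀ :=
    calc ε * (B - t₀) ≤ ε * |B - t₀| := by gcongr; exact le_abs_self _
      _ ≤ δ * |B - t₀| := by gcongr; exact min_le_left δ 1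
      _ ≤ t - t₀ := by rw [mul_comm]; exact hδB.le
  have hp := convex_stdSimplex ℝ P ⟨p₀.nonneg, p₀.sum_one⟩ hu hε1 hε.le (by ring)
  refine ⟨⟨_, hp.1, hp.2⟩, fun π => ?_, fun x hx => ?_⟩
  · exact add_pos_of_nonneg_of_pos (mul_nonneg hε1 (p₀.nonneg π)) (mul_pos hε (hu_pos π))
  calc ∑ π, ((1 - ε) • p₀.p + ε • u) π * H x π
      = (1 - ε) * ∑ π, p₀.p π * H x π + ε * ∑ π, u π * H x π := by
        simp only [Pi.add_apply, Pi.smul_apply, smul_eq_mul, add_mul, Finset.sum_add_distrib,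
          Finset.mul_sum, mul_assoc]
    _ ≤ (1 - ε) * t₀ + ε * B := by
        gcongr
        exacts [hp₀ x hx, hB ⟨x, hx, rfl⟩]
    _ ≤ t := by linarith

end Minimax

section Concavity

variable {Pol Obs Mod I : Type*} [Fintype Pol] [Fintype Mod]
  {q : Mod → Pol → Obs → ℝ} {k : Mod × Pol → I} {η : ℝ} {c : Pol → Obs → ℝ}

/-- Joint laws of model and comparator whose observation laws are absolutely continuous with
respect to the reference `c`; on it the payoff `airPayoff` is concave and continuous. -/
def admissible (q : Mod → Pol → Obs → ℝ) (c : Pol → Obs → ℝ) : Set (Mod × Pol → ℝ) :=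
  {ν ∈ stdSimplex ℝ (Mod × Pol) | ∀ π, AbsCont (pairMixObs q ν π) (c π)}

theorem pushforward_smul_add_smul {X : Type*} [Fintype X] (k : X → I) (a b : ℝ) (w w' : X → ℝ) :
    pushforward k (a • w + b • w') = a • pushforward k w + b • pushforward k w' := by
  classical
  funext i
  simp only [pushforward, Pi.add_apply, Pi.smul_apply, smul_eq_mul, Finset.mul_sum, mul_ite,
    mul_zero, ← Finset.sum_add_distrib]
  exact Finset.sum_congr rfl fun x _ => by split_ifs <;> simp

theorem jointLaw_smul_add_smul (a b : ℝ) (ν ν' : Mod × Pol → ℝ) (π : Pol) :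
    jointLaw q k (a • ν + b • ν') π = a • jointLaw q k ν π + b • jointLaw q k ν' π := by
  funext z
  have h := congrFun (pushforward_smul_add_smul k a b (fun x => ν x * q x.1 π z.2)
    fun x => ν' x * q x.1 π z.2) z.1
  simpa [jointLaw, Pi.add_def, Pi.smul_def, add_mul, mul_assoc] using h

theorem pairMixObs_smul_add_smul (a b : ℝ) (ν ν' : Mod × Pol → ℝ) (π : Pol) :
    pairMixObs q (a • ν + b • ν') π = a • pairMixObs q ν π + b • pairMixObs q ν' π := by
  funext o
  simp [pairMixObs, add_mul, mul_assoc, Finset.sum_add_distrib, Finset.mul_sum]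

theorem regret_smul_add_smul (V : Mod → Pol → ℝ) (a b : ℝ) (ν ν' : Mod × Pol → ℝ) (π : Pol) :
    regret V (a • ν + b • ν') π = a * regret V ν π + b * regret V ν' π := by
  simp [regret, add_mul, mul_assoc, Finset.sum_add_distrib, Finset.mul_sum]

theorem convex_admissible : Convex ℝ (admissible q c) := by
  intro ν hν ν' hν' a b ha hb hab
  refine ⟨convex_stdSimplex ℝ _ hν.1 hν'.1 ha hb hab, fun π o ho => ?_⟩
  simp [pairMixObs_smul_add_smul, hν.2 π o ho, hν'.2 π o ho]

theorem isCompact_admissible : IsCompact (admissible q c) := by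
  have hclosed : IsClosed {ν : Mod × Pol → ℝ | ∀ π, AbsCont (pairMixObs q ν π) (c π)} := by
    simp only [AbsCont, Set.ofPred_forall]
    refine isClosed_iInter fun π => isClosed_iInter fun o => isClosed_iInter fun _ => ?_
    exact isClosed_eq (by unfold pairMixObs; fun_prop) continuous_const
  exact (isCompact_stdSimplex ℝ _).inter_right hclosed

theorem absCont_jointLaw (hq : ∀ m π o, 0 ≤ q m π o) {ν : Mod × Pol → ℝ}
    (hν : ν ∈ admissible q c) (π : Pol) :
    AbsCont (jointLaw q k ν π) (prodVec (pushforward k ν) (c π)) := by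
  classical
  rintro ⟨i, o⟩ h
  refine Finset.sum_eq_zero fun x _ => ?_
  split_ifs with hx
  · rcases mul_eq_zero.mp h with hi | ho
    · exact mul_eq_zero_of_left (eq_zero_of_pushforward_eq_zero k hν.1.1 (hx ▸ hi)) _
    · exact congrFun ((Fintype.sum_eq_zero_iff_of_nonneg fun y =>
        mul_nonneg (hν.1.1 y) (hq y.1 π o)).mp (hν.2 π o ho)) x
  · rfl

variable [Fintype Obs] [Fintype I]

theorem concaveOn_airPayoff (V : Mod → Pol → ℝ) (hq : ∀ m π o, 0 ≤ q m π o)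
    (hη : 0 < η) (hc : ∀ π, 0 ≤ c π) (π : Pol) :
    ConcaveOn ℝ (admissible q c) (airPayoff q V k η c · π) := by
  refine ⟨convex_admissible, fun ν hν ν' hν' a b ha hb _ => ?_⟩
  have hJ {ν} (hν : ν ∈ admissible q c) {s : ℝ} (hs : 0 ≤ s) : 0 ≤ s • jointLaw q k ν π :=
    smul_nonneg hs (jointLaw_nonneg hq hν.1.1 π)
  have href {ν} (hν : ν ∈ admissible q c) {s : ℝ} (hs : 0 ≤ s) :
      0 ≤ s • prodVec (pushforward k ν) (c π) :=
    smul_nonneg hs (prodVec_nonneg (pushforward_nonneg k hν.1.1) (hc π))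
  have hprod : prodVec (pushforward k (a • ν + b • ν')) (c π)
      = a • prodVec (pushforward k ν) (c π) + b • prodVec (pushforward k ν') (c π) := by
    funext z
    simp [prodVec, pushforward_smul_add_smul, add_mul, mul_assoc]
  have hconvex : relEnt (jointLaw q k (a • ν + b • ν') π)
        (prodVec (pushforward k (a • ν + b • ν')) (c π))
      ≤ a * relEnt (jointLaw q k ν π) (prodVec (pushforward k ν) (c π))
        + b * relEnt (jointLaw q k ν' π) (prodVec (pushforward k ν') (c π)) := by
    rw [hprod, jointLaw_smul_add_smul, ← relEnt_smul, ← relEnt_smul]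
    exact relEnt_add_le (hJ hν ha) (href hν ha) (hJ hν' hb) (href hν' hb)
      ((absCont_jointLaw hq hν π).smul a) ((absCont_jointLaw hq hν' π).smul b)
  have := mul_le_mul_of_nonneg_left hconvex (inv_nonneg.mpr hη.le)
  simp only [airPayoff, regret_smul_add_smul, smul_eq_mul]
  linarith

theorem continuousOn_airPayoff (V : Mod → Pol → ℝ) (hq : ∀ m π o, 0 ≤ q m π o)
    (hq1 : ∀ m π, ∑ o, q m π o = 1) (π : Pol) :
    ContinuousOn (airPayoff q V k η c · π) (admissible q c) := by
  have hregret : Continuous (regret V · π) := by unfold regret; fun_prop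
  have hjoint : Continuous fun ν : Mod × Pol → ℝ => jointLaw q k ν π := by
    unfold jointLaw pushforward
    refine continuous_pi fun z => continuous_finsetSum _ fun x _ => ?_
    split_ifs <;> fun_prop
  simp only [airPayoff, ← fstMarginal_jointLaw hq1 (k := k) π]
  refine hregret.continuousOn.sub (continuousOn_const.mul ?_)
  refine (continuousOn_relEnt_prodVec_fstMarginal (c π)).comp hjoint.continuousOn fun ν hν => ?_
  exact ⟨jointLaw_nonneg hq hν.1.1 π, by rw [sndMarginal_jointLaw]; exact hν.2 π⟩

theorem airPayoff_le_airPayoff_pairMixObs (V : Mod → Pol → ℝ) (hq : ∀ m π o, 0 ≤ q m π o)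
    (hq1 : ∀ m π, ∑ o, q m π o = 1) (hη : 0 < η) {π : Pol} (hc : 0 ≤ c π)
    (hc1 : ∑ o, c π o ≤ 1) {ν : Mod × Pol → ℝ} (hν : ν ∈ admissible q c) :
    airPayoff q V k η c ν π ≤ airPayoff q V k η (pairMixObs q ν) ν π := by
  rw [airPayoff_pairMixObs V hq1, airPayoff]
  gcongr
  exact mutualInfo_jointLaw_le hq hq1 hν.1 (AbsCont.refl _) (hν.2 π)
    (pushforward_nonneg k hν.1.1) hc (by rw [sum_pushforward, hν.1.2]) hc1

end Concavity

section Values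

variable {Pol Obs Mod I : Type*} [Fintype Pol] [Fintype Obs] [Fintype Mod]
  {q : Mod → Pol → Obs → ℝ} {V : Mod → Pol → ℝ} {η : ℝ} {c : Pol → Obs → ℝ}

/-- The objective inside `DECbar`, with an arbitrary reference `c` in place of the observation laws
of the mixture `μbar`. -/
def decObjective (q : Mod → Pol → Obs → ℝ) (V : Mod → Pol → ℝ) (η : ℝ) (c : Pol → Obs → ℝ)
    (p : Pol → ℝ) (μ : Mod → ℝ) : EReal :=
  ((∑ π : Pol, p π * ((⨆ π' : Pol, ∑ m : Mod, μ m * V m π') - ∑ m : Mod, μ m * V m π) : ℝ) : EReal)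
    - ((η⁻¹ : ℝ) : EReal) * ∑ π : Pol, ((p π : ℝ) : EReal) * KL (mixObs q μ π) (c π)

theorem decObjective_eq_sum_decPayoff {μ : Mod → ℝ} (h : ∀ π, AbsCont (mixObs q μ π) (c π))
    (p : Pol → ℝ) :
    decObjective q V η c p μ = ((∑ π, p π * decPayoff q V η c μ π : ℝ) : EReal) := by
  rw [decObjective, sum_coe_mul_KL p h, ← EReal.coe_mul, ← EReal.coe_sub]
  simp only [decPayoff, mul_sub, Finset.sum_sub_distrib, Finset.mul_sum, mul_left_comm]

theorem decObjective_eq_bot (hη : 0 < η) {p : Pol → ℝ} (hp : ∀ π, 0 < p π) {μ : Mod → ℝ} {π : Pol}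
    (h : ¬AbsCont (mixObs q μ π) (c π)) : decObjective q V η c p μ = ⊥ := by
  rw [decObjective, sum_coe_mul_KL_eq_top (fun π => (hp π).le) (hp π) h, sub_inv_mul_top hη]

variable [Fintype I]

theorem AIRmaxmin_le_DECbar [DecidableEq I] {k : Mod × Pol → I} (hk : ∀ x y, k x = k y → x.2 = y.2)
    (hq : ∀ m π o, 0 ≤ q m π o) (hq1 : ∀ m π, ∑ o, q m π o = 1) (hη : 0 < η) :
    AIRmaxmin q V (fun x => some (k x)) η ≤ DECbar q V (fun x => some (k x)) η := by
  refine iSup_le fun ρ => iSup_le fun ν => ?_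
  refine le_iSup_of_le ⟨ν.1.map Prod.fst, fun m hm => ?_⟩ (iInf_mono fun p => ?_)
  · obtain ⟨x, rfl, -⟩ := FDist.exists_of_map_ne_zero hm
    exact ⟨k x, x.2, rfl⟩
  obtain ⟨i, μ, hμ, hac, hle⟩ := exists_cell_sum_airPayoff_le (V := V) (η := η) hk hq p ν.1
  have hcell (m : Mod) (hm : μ.p m ≠ 0) : ∃ π, some (k (m, π)) = some i :=
    (hμ m hm).imp fun _ => congrArg some
  refine le_iSup_of_le i (le_iSup_of_le ⟨μ, hcell⟩ ?_)
  calc AIR q V (fun x => some (k x)) η ρ.p p.p ν.1.p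
      ≤ ((∑ π, p.p π * airPayoff q V k η (pairMixObs q ν.1.p) ν.1.p π : ℝ) : EReal) :=
        AIR_le_sum_airPayoff V hq hq1 hη ρ p ν.1
    _ ≤ ((∑ π, p.p π * decPayoff q V η (pairMixObs q ν.1.p) μ.p π : ℝ) : EReal) :=
        EReal.coe_le_coe_iff.mpr hle
    _ = decObjective q V η (mixObs q (ν.1.map Prod.fst).p) p.p μ.p := by
        rw [mixObs_map_fst, decObjective_eq_sum_decPayoff hac]

theorem exists_airPayoff_le_of_AIRmaxmin_lt [DecidableEq I] {k : Mod × Pol → I}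
    (hq : ∀ m π o, 0 ≤ q m π o) (hq1 : ∀ m π, ∑ o, q m π o = 1) {t : ℝ}
    (ht : AIRmaxmin q V (fun x => some (k x)) η < t) (ν : FDist (Mod × Pol)) :
    ∃ π, airPayoff q V k η (pairMixObs q ν.p) ν.p π ≤ t := by
  by_contra! hlt
  refine ht.not_ge (le_iSup_of_le (ν.map k) (le_iSup_of_le ⟨ν, by simp⟩ (le_iInf fun p => ?_)))
  rw [AIR_map_eq_sum_airPayoff V hq hq1, EReal.coe_le_coe_iff, ← p.sum_mul_const t]
  exact Finset.sum_le_sum fun π _ => mul_le_mul_of_nonneg_left (hlt π).le (p.nonneg π)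

theorem exists_pos_dist_forall_sum_airPayoff_le {k : Mod × Pol → I} (hq : ∀ m π o, 0 ≤ q m π o)
    (hq1 : ∀ m π, ∑ o, q m π o = 1) (hη : 0 < η) (hc : ∀ π, 0 ≤ c π) (hc1 : ∀ π, ∑ o, c π o ≤ 1)
    (hne : (admissible q c).Nonempty) {t₀ t : ℝ} (ht : t₀ < t)
    (ht₀ : ∀ ν : FDist (Mod × Pol), ∃ π, airPayoff q V k η (pairMixObs q ν.p) ν.p π ≤ t₀) :
    ∃ p : FDist Pol, (∀ π, 0 < p.p π) ∧
      ∀ ν ∈ admissible q c, ∑ π, p.p π * airPayoff q V k η c ν π ≤ t := by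
  have hreply : ∀ ν ∈ admissible q c, ∃ π, airPayoff q V k η c ν π ≤ t₀ := fun ν hν =>
    (ht₀ ⟨ν, hν.1.1, hν.1.2⟩).imp fun π =>
      (airPayoff_le_airPayoff_pairMixObs V hq hq1 hη (hc π) (hc1 π) hν).trans
  obtain ⟨p₀, hp₀⟩ := exists_dist_forall_sum_mul_le hne convex_admissible isCompact_admissible
    (concaveOn_airPayoff V hq hη hc) (continuousOn_airPayoff V hq hq1) hreply
  exact exists_pos_dist_forall_sum_mul_le isCompact_admissible (continuousOn_airPayoff V hq hq1)
    hp₀ ht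

/-- Only because the model and the comparator are chosen independently may a mixture of models from
one cell be paired with its own best policy. -/
theorem exists_admissible_decPayoff_eq [Nonempty Pol] {partM : Mod → I} {μ : FDist Mod} {θ : I}
    (hμ : ∀ m, μ.p m ≠ 0 → partM m = θ) (hac : ∀ π, AbsCont (mixObs q μ.p π) (c π)) :
    ∃ ν ∈ admissible q c, ∀ π, decPayoff q V η c μ.p π
      = airPayoff q V (fun x => (partM x.1, x.2)) η c ν π := by
  obtain ⟨π', hπ'⟩ := exists_eq_ciSup_of_finite (f := fun π' => ∑ m, μ.p m * V m π')
  let ν := μ.map fun m => (m, π')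
  have hcell : ∀ x, ν.p x ≠ 0 → (partM x.1, x.2) = (θ, π') := fun x hx => by
    obtain ⟨m, rfl, hm⟩ := FDist.exists_of_map_ne_zero hx
    simp [hμ m hm]
  refine ⟨ν.p, ⟨⟨ν.nonneg, ν.sum_one⟩, by simpa only [ν, pairMixObs_map_prodMk] using hac⟩,
    fun π => ?_⟩
  rw [airPayoff_of_cell c hcell, regret_map_prodMk, pairMixObs_map_prodMk, decPayoff, hπ']

theorem DECbar_le_AIRmaxmin [DecidableEq I] [DecidableEq Pol] (partM : Mod → I)
    (hq : ∀ m π o, 0 ≤ q m π o) (hq1 : ∀ m π, ∑ o, q m π o = 1) (hη : 0 < η) :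
    DECbar q V (fun x => some (partM x.1, x.2)) η
      ≤ AIRmaxmin q V (fun x => some (partM x.1, x.2)) η := by
  refine iSup_le fun μbar => EReal.le_of_forall_lt_iff_le.mp fun t ht => ?_
  obtain ⟨t₀, ht₀, hlt⟩ := EReal.exists_between_coe_real ht
  obtain ⟨m, hm⟩ := μbar.1.exists_pos
  obtain ⟨-, π₀, -⟩ := μbar.2 m hm.ne'
  have : Nonempty Pol := ⟨π₀⟩
  let νbar := μbar.1.map fun m => (m, π₀)
  have hνbar : pairMixObs q νbar.p = mixObs q μbar.1.p := pairMixObs_map_prodMk q μbar.1 π₀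
  obtain ⟨p, hp, hpt⟩ := exists_pos_dist_forall_sum_airPayoff_le (c := mixObs q μbar.1.p)
    hq hq1 hη (hνbar ▸ pairMixObs_nonneg hq νbar.nonneg)
    (fun π => by rw [← hνbar, sum_pairMixObs hq1, νbar.sum_one])
    ⟨νbar.p, ⟨νbar.nonneg, νbar.sum_one⟩, fun π => hνbar ▸ AbsCont.refl _⟩
    (EReal.coe_lt_coe_iff.mp hlt) (exists_airPayoff_le_of_AIRmaxmin_lt hq hq1 ht₀)
  refine iInf_le_of_le p (iSup_le fun i => iSup_le fun μ => ?_)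
  change decObjective q V η (mixObs q μbar.1.p) p.p μ.1.p ≤ t
  by_cases hac : ∀ π, AbsCont (mixObs q μ.1.p π) (mixObs q μbar.1.p π)
  · have hμ (m : Mod) (hm : μ.1.p m ≠ 0) : partM m = i.1 := by
      obtain ⟨π, hπ⟩ := μ.2 m hm
      exact congrArg Prod.fst (Option.some.inj hπ)
    obtain ⟨ν, hν, heq⟩ := exists_admissible_decPayoff_eq (V := V) (η := η) hμ hac
    rw [decObjective_eq_sum_decPayoff hac, EReal.coe_le_coe_iff]
    simpa only [heq] using hpt ν hν
  · obtain ⟨π, hπ⟩ := not_forall.mp hac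
    exact (decObjective_eq_bot hη hp hπ).trans_le bot_le

end Values

theorem airmaxmin_eq_DECbar_of_fixed_comparator_general
    {Pol Obs Mod I0 : Type*}
    [Fintype Pol] [Fintype Obs] [Fintype Mod] [Fintype I0]
    [DecidableEq I0] [DecidableEq Pol]
    (q : Mod → Pol → Obs → ℝ)
    (hq : ∀ m π, (∀ o, 0 ≤ q m π o) ∧ ∑ o, q m π o = 1)
    (V : Mod → Pol → ℝ)
    (partM : Mod → I0)
    (η : ℝ) (hη : 0 < η) :
    AIRmaxmin q V (fun mp => some (partM mp.1, mp.2)) η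
      = DECbar q V (fun mp => some (partM mp.1, mp.2)) η := by
  have hq0 : ∀ m π o, 0 ≤ q m π o := fun m π => (hq m π).1
  have hq1 : ∀ m π, ∑ o, q m π o = 1 := fun m π => (hq m π).2
  exact le_antisymm
    (AIRmaxmin_le_DECbar (fun _ _ h => (Prod.ext_iff.mp h).2) hq0 hq1 hη)
    (DECbar_le_AIRmaxmin partM hq0 hq1 hη)

/-- **Lemma (fixed-comparator games: `AIR^Φ` max-min equals `DEC^KL_η(𝓜̄(Φ))`).**
Suppose the choice of model is independent of the comparator: there is a partition
`Θ` of `𝓜` (given by `partM : Mod → I0`) such that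
`Φ = { {(M, π) : partM M = θ} : θ ∈ Θ, π ∈ Π }` (indexed by `I0 × Π`).
Then for every `η > 0`,
`max_{ρ∈Δ(Φ)} max_{ν∈Δ(Ψ)} min_{p∈Δ(Π)} AIR^Φ_{ρ,η}(p,ν) = DEC^KL_η(𝓜̄(Φ))`. -/
theorem airmaxmin_eq_DECbar_of_fixed_comparator
    {Pol Obs Mod I0 : Type*}
    [Fintype Pol] [Fintype Obs] [Fintype Mod] [Fintype I0]
    [DecidableEq I0] [DecidableEq Pol]
    [Nonempty Pol] [Nonempty Obs] [Nonempty Mod]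
    (q : Mod → Pol → Obs → ℝ)
    (hq : ∀ m π, (∀ o, 0 ≤ q m π o) ∧ ∑ o, q m π o = 1)
    (V : Mod → Pol → ℝ)
    (hV : ∀ m π, V m π ∈ Set.Icc (0 : ℝ) 1)
    (partM : Mod → I0)
    (η : ℝ) (hη : 0 < η) :
    AIRmaxmin q V (fun mp => some (partM mp.1, mp.2)) η
      = DECbar q V (fun mp => some (partM mp.1, mp.2)) η :=
  airmaxmin_eq_DECbar_of_fixed_comparator_general q hq V partM η hη
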